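/- (Existence of approximating sequences.) Assume that, in addition to (A.1)-(A.7), there exists γ > 0 such that f and g are γ-strongly convex in x: f(t,x',μ,α') − f(t,x,μ,α) − ⟨(x'−x,α'−α),∂_{(x,α)}f(t,x,μ,α)⟩ ≥ γ|x'−x|² + λ|α'−α|² and g(x',μ) − g(x,μ) − ⟨x'−x, ∂_x g(x,μ)⟩ ≥ γ|x'−x|². Then there exist constants λ' > 0 and c_L' > 0, depending only on λ, c_L and γ, and sequences (f^n)_{n≥1}, (g^n)_{n≥1} such that: (i) for every n, f^n and g^n satisfy (A.1)-(A.7) with parameters λ' and c_L', and ∂_x f^n and ∂_x g^n are bounded; (ii) for every bounded subset of [0,T]×ℝ^d×P₂(ℝ^d)×ℝ^k there exists n₀ such that for all n ≥ n₀, f^n and g^n coincide with f and g respectively on that subset. -/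

import Mathlib

open MeasureTheory ProbabilityTheory Real Filter
open scoped RealInnerProductSpace ENNReal NNReal

noncomputable section

/-- `ℝ^n` with the Euclidean inner product. -/
abbrev Vec (n : ℕ) := EuclideanSpace ℝ (Fin n)

/-- Membership in `𝒫₂(ℝ^n)`: Borel probability measure with finite second moment. -/
def IsP2 {n : ℕ} (μ : Measure (Vec n)) : Prop :=
  IsProbabilityMeasure μ ∧ Integrable (fun x => ‖x‖ ^ 2) μ

/-- The second moment `M₂(μ) = (∫ ‖x‖² dμ)^{1/2}`. -/
def M2 {n : ℕ} (μ : Measure (Vec n)) : ℝ :=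
  Real.sqrt (∫ x, ‖x‖ ^ 2 ∂μ)

/-- The 2-Wasserstein distance, defined as an infimum over couplings. -/
def W2 {n : ℕ} (μ ν : Measure (Vec n)) : ℝ :=
  sInf { r : ℝ | ∃ p : Measure (Vec n × Vec n),
    p.map Prod.fst = μ ∧ p.map Prod.snd = ν ∧
    r = Real.sqrt (∫ q, ‖q.1 - q.2‖ ^ 2 ∂p) }

/-- (A.2): for every `(t,μ)`, `f(t,·,μ,·)` is `C¹` with `c_L`-Lipschitz derivatives
and satisfies the `λ`-convexity condition in `(x,α)`. -/
def CondA2 (T : ℝ) (d k : ℕ) (lam : ℝ) (cL : ℝ≥0)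
    (f : ℝ → Vec d → Measure (Vec d) → Vec k → ℝ) : Prop :=
  ∀ t ∈ Set.Icc (0:ℝ) T, ∀ μ : Measure (Vec d), IsP2 μ →
    ContDiff ℝ 1 (fun p : Vec d × Vec k => f t p.1 μ p.2) ∧
    LipschitzWith cL (fun p : Vec d × Vec k =>
      (gradient (fun x => f t x μ p.2) p.1, gradient (fun a => f t p.1 μ a) p.2)) ∧
    ∀ (x x' : Vec d) (a a' : Vec k),
      f t x' μ a' - f t x μ a - ⟪x' - x, gradient (fun z => f t z μ a) x⟫
        - ⟪a' - a, gradient (fun b => f t x μ b) a⟫ ≥ lam * ‖a' - a‖ ^ 2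

/-- (A.2), second part: local boundedness of `f`, `∂ₓf` and `∂_αf`. -/
def CondA2loc (T : ℝ) (d k : ℕ)
    (f : ℝ → Vec d → Measure (Vec d) → Vec k → ℝ) : Prop :=
  ∀ R > 0, ∃ C, ∀ t ∈ Set.Icc (0:ℝ) T, ∀ (x : Vec d) (a : Vec k) (μ : Measure (Vec d)),
    IsP2 μ → ‖x‖ ≤ R → ‖a‖ ≤ R → M2 μ ≤ R →
      |f t x μ a| ≤ C ∧ ‖gradient (fun z => f t z μ a) x‖ ≤ C ∧
        ‖gradient (fun b => f t x μ b) a‖ ≤ C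

/-- (A.4): `g` is locally bounded and `g(·,μ)` is convex, `C¹`, with `c_L`-Lipschitz gradient. -/
def CondA4 (d : ℕ) (cL : ℝ≥0) (g : Vec d → Measure (Vec d) → ℝ) : Prop :=
  (∀ R > 0, ∃ C, ∀ (x : Vec d) (μ : Measure (Vec d)), IsP2 μ → ‖x‖ ≤ R → M2 μ ≤ R →
    |g x μ| ≤ C) ∧
  ∀ μ : Measure (Vec d), IsP2 μ →
    ContDiff ℝ 1 (fun x => g x μ) ∧ ConvexOn ℝ Set.univ (fun x => g x μ) ∧
    LipschitzWith cL (fun x => gradient (fun z => g z μ) x)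

/-- (A.5): bounds at the origin and local Lipschitz continuity with linear-growth factors,
in all variables including the measure (w.r.t. the 2-Wasserstein distance). -/
def CondA5 (T : ℝ) (d k : ℕ) (cL : ℝ≥0)
    (f : ℝ → Vec d → Measure (Vec d) → Vec k → ℝ)
    (g : Vec d → Measure (Vec d) → ℝ) : Prop :=
  (∀ t ∈ Set.Icc (0:ℝ) T,
    |f t 0 (Measure.dirac 0) 0| ≤ (cL : ℝ) ∧
    ‖gradient (fun z => f t z (Measure.dirac 0) 0) 0‖ ≤ (cL : ℝ) ∧
    ‖gradient (fun b => f t 0 (Measure.dirac 0) b) 0‖ ≤ (cL : ℝ)) ∧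
  (∀ t ∈ Set.Icc (0:ℝ) T, ∀ (x x' : Vec d) (a a' : Vec k) (μ μ' : Measure (Vec d)),
    IsP2 μ → IsP2 μ' →
      |f t x' μ' a' - f t x μ a| ≤
        (cL : ℝ) * (1 + ‖(x', a')‖ + ‖(x, a)‖ + M2 μ + M2 μ')
          * (‖(x' - x, a' - a)‖ + W2 μ' μ)) ∧
  (∀ (x x' : Vec d) (μ μ' : Measure (Vec d)), IsP2 μ → IsP2 μ' →
      |g x' μ' - g x μ| ≤
        (cL : ℝ) * (1 + ‖x'‖ + ‖x‖ + M2 μ + M2 μ') * (‖x' - x‖ + W2 μ' μ))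

/-- (A.6): `|∂_α f(t,x,μ,0)| ≤ c_L`. -/
def CondA6 (T : ℝ) (d k : ℕ) (cL : ℝ≥0)
    (f : ℝ → Vec d → Measure (Vec d) → Vec k → ℝ) : Prop :=
  ∀ t ∈ Set.Icc (0:ℝ) T, ∀ (x : Vec d) (μ : Measure (Vec d)), IsP2 μ →
    ‖gradient (fun b => f t x μ b) 0‖ ≤ (cL : ℝ)

/-- (A.7): the weak mean-reverting condition. -/
def CondA7 (T : ℝ) (d k : ℕ) (cL : ℝ≥0)
    (f : ℝ → Vec d → Measure (Vec d) → Vec k → ℝ)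
    (g : Vec d → Measure (Vec d) → ℝ) : Prop :=
  ∀ t ∈ Set.Icc (0:ℝ) T, ∀ x : Vec d,
    ⟪x, gradient (fun z => f t z (Measure.dirac x) 0) 0⟫ ≥ -(cL : ℝ) * (1 + ‖x‖) ∧
    ⟪x, gradient (fun z => g z (Measure.dirac x)) 0⟫ ≥ -(cL : ℝ) * (1 + ‖x‖)

/-- The assumptions (A.2), (A.4)--(A.7) on the cost functions `f` and `g`. -/
def CostAssumptions (T : ℝ) (d k : ℕ) (lam : ℝ) (cL : ℝ≥0)
    (f : ℝ → Vec d → Measure (Vec d) → Vec k → ℝ)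
    (g : Vec d → Measure (Vec d) → ℝ) : Prop :=
  CondA2 T d k lam cL f ∧ CondA2loc T d k f ∧ CondA4 d cL g ∧
    CondA5 T d k cL f g ∧ CondA6 T d k cL f ∧ CondA7 T d k cL f g

set_option linter.unusedSectionVars false
set_option linter.unusedVariables false

section Abstract

variable {X A : Type*} [NormedAddCommGroup X] [InnerProductSpace ℝ X] [FiniteDimensional ℝ X]
  [NormedAddCommGroup A] [InnerProductSpace ℝ A] [FiniteDimensional ℝ A]

/-- Quadratic two-sided control of a function by its first order expansion. -/
def Sandwich (γ lam C : ℝ) (F : X → A → ℝ) (P : X → A → X) (Q : X → A → A) : Prop :=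
  ∀ (x x' : X) (a a' : A),
    F x a + ⟪x' - x, P x a⟫ + ⟪a' - a, Q x a⟫ + γ * ‖x' - x‖ ^ 2 + lam * ‖a' - a‖ ^ 2 ≤ F x' a' ∧
    F x' a' ≤ F x a + ⟪x' - x, P x a⟫ + ⟪a' - a, Q x a⟫ + C * ‖(x' - x, a' - a)‖ ^ 2

/-- `z` is a minimizer in the definition of the Lipschitz regularization. -/
def IsMinP (K : ℝ) (F : X → A → ℝ) (x : X) (a : A) (z : X) : Prop :=
  ∀ z', F z a + K * ‖x - z‖ ≤ F z' a + K * ‖x - z'‖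

/-- Lipschitz regularization in the first variable. -/
def lipReg (K : ℝ) (F : X → A → ℝ) (x : X) (a : A) : ℝ :=
  ⨅ z, (F z a + K * ‖x - z‖)

theorem sandwich_of_lower {γ lam : ℝ} {c : ℝ≥0} {F : X → A → ℝ} {P : X → A → X} {Q : X → A → A}
    (hγ : 0 ≤ γ) (hlam : 0 ≤ lam)
    (hlow : ∀ (x x' : X) (a a' : A),
      F x' a' - F x a - ⟪x' - x, P x a⟫ - ⟪a' - a, Q x a⟫ ≥ γ * ‖x' - x‖ ^ 2 + lam * ‖a' - a‖ ^ 2)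
    (hlip : LipschitzWith c (fun p : X × A => (P p.1 p.2, Q p.1 p.2))) :
    Sandwich γ lam (2 * c) F P Q := by
  intro x x' a a'
  refine ⟨by linarith [hlow x x' a a'], ?_⟩
  have h1 := hlow x' x a' a
  have h2 := hlip.dist_le_mul (x', a') (x, a)
  rw [dist_eq_norm, dist_eq_norm, Prod.mk_sub_mk, Prod.mk_sub_mk] at h2
  have h3 : ⟪x' - x, P x' a' - P x a⟫ ≤ c * ‖(x' - x, a' - a)‖ ^ 2 := by
    calc _ ≤ ‖x' - x‖ * ‖P x' a' - P x a‖ := real_inner_le_norm _ _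
      _ ≤ ‖(x' - x, a' - a)‖ * (c * ‖(x' - x, a' - a)‖) := by
        gcongr
        · exact norm_fst_le (x' - x, a' - a)
        · exact (norm_fst_le (P x' a' - P x a, Q x' a' - Q x a)).trans h2
      _ = _ := by ring
  have h4 : ⟪a' - a, Q x' a' - Q x a⟫ ≤ c * ‖(x' - x, a' - a)‖ ^ 2 := by
    calc _ ≤ ‖a' - a‖ * ‖Q x' a' - Q x a‖ := real_inner_le_norm _ _
      _ ≤ ‖(x' - x, a' - a)‖ * (c * ‖(x' - x, a' - a)‖) := by
        gcongr
        · exact norm_snd_le (x' - x, a' - a)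
        · exact (norm_snd_le (P x' a' - P x a, Q x' a' - Q x a)).trans h2
      _ = _ := by ring
  have h5 : ⟪x - x', P x' a'⟫ = -⟪x' - x, P x' a'⟫ := by rw [← inner_neg_left, neg_sub]
  have h6 : ⟪a - a', Q x' a'⟫ = -⟪a' - a, Q x' a'⟫ := by rw [← inner_neg_left, neg_sub]
  rw [h5, h6] at h1
  rw [inner_sub_right] at h3 h4
  have h7 : 0 ≤ γ * ‖x - x'‖ ^ 2 := by positivity
  have h8 : 0 ≤ lam * ‖a - a'‖ ^ 2 := by positivity
  linarith

namespace Sandwich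

variable {γ lam C : ℝ} {F : X → A → ℝ} {P : X → A → X} {Q : X → A → A}

theorem hasFDerivAt (h : Sandwich γ lam C F P Q) (hγ : 0 ≤ γ) (hlam : 0 ≤ lam) (p : X × A) :
    HasFDerivAt (fun p : X × A => F p.1 p.2)
      ((innerSL ℝ (P p.1 p.2)).coprod (innerSL ℝ (Q p.1 p.2))) p := by
  set L := (innerSL ℝ (P p.1 p.2)).coprod (innerSL ℝ (Q p.1 p.2)) with hL
  have h1 : HasFDerivAt (fun q : X × A => F q.1 q.2 - F p.1 p.2 - L (q - p)) (0 : X × A →L[ℝ] ℝ) p := by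
    refine Asymptotics.IsBigO.hasFDerivAt (𝕜 := ℝ) (n := 2) ?_ (by norm_num)
    refine Asymptotics.IsBigO.of_bound C (Filter.Eventually.of_forall fun q => ?_)
    obtain ⟨h2, h3⟩ := h p.1 q.1 p.2 q.2
    have h4 : L (q - p) = ⟪q.1 - p.1, P p.1 p.2⟫ + ⟪q.2 - p.2, Q p.1 p.2⟫ := by
      simp [hL, real_inner_comm]
    have h7 : 0 ≤ γ * ‖q.1 - p.1‖ ^ 2 := by positivity
    have h8 : 0 ≤ lam * ‖q.2 - p.2‖ ^ 2 := by positivity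
    have h9 : ‖‖q - p‖ ^ 2‖ = ‖(q.1 - p.1, q.2 - p.2)‖ ^ 2 := by
      rw [Real.norm_of_nonneg (by positivity)]; rfl
    rw [h4, h9, Real.norm_eq_abs, abs_le]
    constructor <;> linarith
  have h0 : HasFDerivAt (fun q : X × A => q - p) (ContinuousLinearMap.id ℝ (X × A)) p :=
    (hasFDerivAt_id p).sub_const p
  have h2 := (h1.add (L.hasFDerivAt.comp p h0)).add_const (F p.1 p.2)
  refine (h2.congr_fderiv ?_).congr_of_eventuallyEq (Filter.Eventually.of_forall fun q => ?_)
  · ext <;> simp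
  · simp

theorem gradient_fst (h : Sandwich γ lam C F P Q) (hγ : 0 ≤ γ) (hlam : 0 ≤ lam) (x : X) (a : A) :
    gradient (fun z => F z a) x = P x a := by
  apply HasGradientAt.gradient
  rw [hasGradientAt_iff_hasFDerivAt]
  have h0 : HasFDerivAt (fun y : X => (y, a))
      ((ContinuousLinearMap.id ℝ X).prod (0 : X →L[ℝ] A)) x :=
    (hasFDerivAt_id x).prodMk (hasFDerivAt_const a x)
  have := (h.hasFDerivAt hγ hlam (x, a)).comp x h0
  refine this.congr_fderiv ?_
  ext y
  simp

theorem gradient_snd (h : Sandwich γ lam C F P Q) (hγ : 0 ≤ γ) (hlam : 0 ≤ lam) (x : X) (a : A) :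
    gradient (fun b => F x b) a = Q x a := by
  apply HasGradientAt.gradient
  rw [hasGradientAt_iff_hasFDerivAt]
  have h0 : HasFDerivAt (fun y : A => (x, y))
      ((0 : A →L[ℝ] X).prod (ContinuousLinearMap.id ℝ A)) a :=
    (hasFDerivAt_const x a).prodMk (hasFDerivAt_id a)
  have := (h.hasFDerivAt hγ hlam (x, a)).comp a h0
  refine this.congr_fderiv ?_
  ext y
  simp

theorem lipschitz (h : Sandwich γ lam C F P Q) (hγ : 0 ≤ γ) (hlam : 0 ≤ lam) (c : ℝ≥0)
    (hc : 2 * C ≤ c) :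
    LipschitzWith c (fun p : X × A => (P p.1 p.2, Q p.1 p.2)) := by
  refine LipschitzWith.of_dist_le_mul fun p q => ?_
  rw [dist_eq_norm, dist_eq_norm, Prod.mk_sub_mk]
  have key : ∀ (u : X) (v : A), ‖(u, v)‖ ≤ ‖p - q‖ →
      ⟪u, P p.1 p.2 - P q.1 q.2⟫ + ⟪v, Q p.1 p.2 - Q q.1 q.2⟫ ≤ c * ‖p - q‖ ^ 2 := by
    intro u v huv
    have e1 := (h q.1 (q.1 + u) q.2 (q.2 + v)).2
    have e2 := (h p.1 (q.1 + u) p.2 (q.2 + v)).1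
    have e3 := (h p.1 q.1 p.2 q.2).2
    have h7 : 0 ≤ γ * ‖q.1 + u - p.1‖ ^ 2 := by positivity
    have h8 : 0 ≤ lam * ‖q.2 + v - p.2‖ ^ 2 := by positivity
    have e4 : ‖(q.1 - p.1, q.2 - p.2)‖ = ‖p - q‖ := by rw [norm_sub_rev]; rfl
    have e5 : q.1 + u - p.1 = (q.1 - p.1) + u := by abel
    have e6 : q.2 + v - p.2 = (q.2 - p.2) + v := by abel
    rw [e4] at e3
    rw [e5, e6, inner_add_left, inner_add_left] at e2
    rw [add_sub_cancel_left, add_sub_cancel_left] at e1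
    rw [e5] at h7
    rw [e6] at h8
    rw [inner_sub_right, inner_sub_right]
    by_cases hC : 0 ≤ C
    · have e7 : C * ‖(u, v)‖ ^ 2 ≤ C * ‖p - q‖ ^ 2 := by gcongr
      have e8 : 2 * C * ‖p - q‖ ^ 2 ≤ c * ‖p - q‖ ^ 2 := by gcongr
      linarith
    · have e7 : C * ‖(u, v)‖ ^ 2 ≤ 0 := mul_nonpos_of_nonpos_of_nonneg (by linarith) (by positivity)
      have e8 : C * ‖p - q‖ ^ 2 ≤ 0 := mul_nonpos_of_nonpos_of_nonneg (by linarith) (by positivity)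
      have e9 : 0 ≤ c * ‖p - q‖ ^ 2 := by positivity
      linarith
  rcases eq_or_ne p q with rfl | hpq
  · simp
  have hpos : 0 < ‖p - q‖ := norm_pos_iff.2 (sub_ne_zero.2 hpq)
  rw [Prod.norm_mk, max_le_iff]
  constructor
  · set w := P p.1 p.2 - P q.1 q.2
    by_cases hw : w = 0
    · rw [hw, norm_zero]; positivity
    have hw' : 0 < ‖w‖ := norm_pos_iff.2 hw
    have := key ((‖p - q‖ / ‖w‖) • w) 0 (by
      rw [Prod.norm_mk, norm_smul, norm_zero, Real.norm_of_nonneg (by positivity)]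
      simp [hw'.ne'])
    rw [inner_zero_left, add_zero, real_inner_smul_left, real_inner_self_eq_norm_sq] at this
    have e : ‖p - q‖ / ‖w‖ * ‖w‖ ^ 2 = ‖p - q‖ * ‖w‖ := by field_simp
    rw [e] at this
    nlinarith
  · set w := Q p.1 p.2 - Q q.1 q.2
    by_cases hw : w = 0
    · rw [hw, norm_zero]; positivity
    have hw' : 0 < ‖w‖ := norm_pos_iff.2 hw
    have := key 0 ((‖p - q‖ / ‖w‖) • w) (by
      rw [Prod.norm_mk, norm_smul, norm_zero, Real.norm_of_nonneg (by positivity)]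
      simp [hw'.ne'])
    rw [inner_zero_left, zero_add, real_inner_smul_left, real_inner_self_eq_norm_sq] at this
    have e : ‖p - q‖ / ‖w‖ * ‖w‖ ^ 2 = ‖p - q‖ * ‖w‖ := by field_simp
    rw [e] at this
    nlinarith

theorem contDiff (h : Sandwich γ lam C F P Q) (hγ : 0 ≤ γ) (hlam : 0 ≤ lam) :
    ContDiff ℝ 1 (fun p : X × A => F p.1 p.2) := by
  rw [contDiff_one_iff_hasFDerivAt]
  refine ⟨_, ?_, fun p => h.hasFDerivAt hγ hlam p⟩
  have hc := (h.lipschitz hγ hlam (2 * C).toNNReal (Real.le_coe_toNNReal _)).continuous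
  have h1 : Continuous fun p : X × A => innerSL ℝ (P p.1 p.2) :=
    (innerSL ℝ).continuous.comp (continuous_fst.comp hc)
  have h2 : Continuous fun p : X × A => innerSL ℝ (Q p.1 p.2) :=
    (innerSL ℝ).continuous.comp (continuous_snd.comp hc)
  have h3 : (fun p : X × A => (innerSL ℝ (P p.1 p.2)).coprod (innerSL ℝ (Q p.1 p.2))) =
      fun p => (innerSL ℝ (P p.1 p.2)).comp (ContinuousLinearMap.fst ℝ X A)
        + (innerSL ℝ (Q p.1 p.2)).comp (ContinuousLinearMap.snd ℝ X A) := by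
    ext p <;> simp
  rw [h3]
  exact (h1.clm_comp continuous_const).add (h2.clm_comp continuous_const)

theorem exists_min (h : Sandwich γ lam C F P Q) (hγ : 0 < γ) (hlam : 0 ≤ lam) {K : ℝ} (hK : 0 ≤ K)
    (x : X) (a : A) : ∃ z, IsMinP K F x a z := by
  have hc : Continuous fun z => F z a + K * ‖x - z‖ := by
    have h1 := (h.contDiff hγ.le hlam).continuous
    have h2 : Continuous fun z => F z a := h1.comp (by fun_prop : Continuous fun z : X => (z, a))
    fun_prop
  refine hc.exists_forall_le' x ?_
  have := (isCompact_closedBall x (‖P x a‖ / γ)).compl_mem_cocompact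
  filter_upwards [this] with z hz
  have hz' : ‖P x a‖ / γ < ‖z - x‖ := by
    simpa [dist_eq_norm] using hz
  rw [div_lt_iff₀ hγ] at hz'
  have h1 := (h x z a a).1
  have h2 : -(‖z - x‖ * ‖P x a‖) ≤ ⟪z - x, P x a⟫ :=
    (abs_le.1 (abs_real_inner_le_norm _ _)).1
  simp only [sub_self, inner_zero_left, norm_zero, mul_zero, add_zero] at h1 ⊢
  have h3 : 0 ≤ K * ‖x - z‖ := by positivity
  have h4 : 0 ≤ ‖z - x‖ := norm_nonneg _
  nlinarith

theorem min_bound (h : Sandwich γ lam C F P Q) (hγ : 0 < γ) {K : ℝ} (hK : 0 ≤ K)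
    {x : X} {a : A} {z : X} (hz : IsMinP K F x a z) : ‖z - x‖ ≤ ‖P x a‖ / γ := by
  have h0 := hz x
  have h1 := (h x z a a).1
  have h2 : -(‖z - x‖ * ‖P x a‖) ≤ ⟪z - x, P x a⟫ :=
    (abs_le.1 (abs_real_inner_le_norm _ _)).1
  simp only [sub_self, inner_zero_left, norm_zero, mul_zero, add_zero] at h0 h1
  have h3 : 0 ≤ K * ‖x - z‖ := by positivity
  have h4 : 0 ≤ ‖z - x‖ := norm_nonneg _
  rw [le_div_iff₀ hγ]
  by_contra! hlt
  rcases h4.eq_or_lt with h5 | h5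
  · rw [← h5] at hlt
    have := norm_nonneg (P x a)
    linarith
  · nlinarith

theorem min_self (h : Sandwich γ lam C F P Q) (hγ : 0 < γ) {K : ℝ}
    {x : X} {a : A} (hP : ‖P x a‖ ≤ K) : IsMinP K F x a x := by
  intro z
  have h1 := (h x z a a).1
  have h2 : -(‖z - x‖ * ‖P x a‖) ≤ ⟪z - x, P x a⟫ :=
    (abs_le.1 (abs_real_inner_le_norm _ _)).1
  simp only [sub_self, inner_zero_left, norm_zero, mul_zero, add_zero] at h1 ⊢
  rw [norm_sub_rev x z]
  have h4 : 0 ≤ ‖z - x‖ := norm_nonneg _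
  have h5 : 0 ≤ γ * ‖z - x‖ ^ 2 := by positivity
  nlinarith

theorem subgrad (h : Sandwich γ lam C F P Q) {K : ℝ} (hK : 0 ≤ K)
    {x : X} {a : A} {z : X} (hz : IsMinP K F x a z) (w : X) :
    K * ‖x - z‖ + ⟪w - (x - z), P z a⟫ ≤ K * ‖w‖ := by
  set D := K * ‖w‖ - K * ‖x - z‖ - ⟪w - (x - z), P z a⟫ with hD
  set v := x - w - z with hv
  have key : ∀ t : ℝ, 0 < t → t ≤ 1 → 0 ≤ D + t * (C * ‖v‖ ^ 2) := by
    intro t ht ht1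
    have h1 := hz (z + t • v)
    have h2 := (h z (z + t • v) a a).2
    simp only [add_sub_cancel_left, sub_self, inner_zero_left, add_zero, Prod.norm_mk,
      norm_zero, norm_smul, real_inner_smul_left, Real.norm_of_nonneg ht.le] at h2
    rw [max_eq_left (by positivity)] at h2
    have h3 : x - (z + t • v) = (1 - t) • (x - z) + t • w := by
      rw [hv]; module
    have h4 : ‖x - (z + t • v)‖ ≤ (1 - t) * ‖x - z‖ + t * ‖w‖ := by
      rw [h3]
      refine (norm_add_le _ _).trans ?_
      rw [norm_smul, norm_smul, Real.norm_of_nonneg ht.le, Real.norm_of_nonneg (by linarith)]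
    have h5 := mul_le_mul_of_nonneg_left h4 hK
    have h6 : ⟪v, P z a⟫ = - ⟪w - (x - z), P z a⟫ := by
      rw [← inner_neg_left, hv]; congr 1; abel
    rw [h6] at h2
    have h7 : 0 ≤ t * (D + t * (C * ‖v‖ ^ 2)) := by
      rw [hD]; nlinarith
    exact nonneg_of_mul_nonneg_right h7 ht
  have : 0 ≤ D := by
    by_contra! hneg
    have h1 := key 1 one_pos le_rfl
    set B := C * ‖v‖ ^ 2
    have hB : 0 < B := by linarith
    have h2 := key (-D / (2 * B)) (div_pos (by linarith) (by positivity)) (by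
      rw [div_le_one (by positivity)]; linarith)
    have : -D / (2 * B) * B = -D / 2 := by field_simp
    linarith
  linarith

theorem grad_bound (h : Sandwich γ lam C F P Q) {K : ℝ} (hK : 0 ≤ K)
    {x : X} {a : A} {z : X} (hz : IsMinP K F x a z) : ‖P z a‖ ≤ K := by
  have h1 := h.subgrad hK hz ((x - z) + P z a)
  rw [add_sub_cancel_left, real_inner_self_eq_norm_sq] at h1
  have h2 := mul_le_mul_of_nonneg_left (norm_add_le (x - z) (P z a)) hK
  by_contra! hlt
  nlinarith [norm_nonneg (P z a)]

end Sandwich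

theorem IsMinP.lipReg_eq {K : ℝ} {F : X → A → ℝ} {x : X} {a : A} {z : X} (hz : IsMinP K F x a z) :
    lipReg K F x a = F z a + K * ‖x - z‖ := by
  refine le_antisymm (ciInf_le ⟨F z a + K * ‖x - z‖, ?_⟩ z) (le_ciInf hz)
  rintro _ ⟨y, rfl⟩
  exact hz y

theorem IsMinP.lipReg_le {K : ℝ} {F : X → A → ℝ} {x : X} {a : A} {z : X} (hz : IsMinP K F x a z)
    (y : X) : lipReg K F x a ≤ F y a + K * ‖x - y‖ := by
  rw [hz.lipReg_eq]; exact hz y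

theorem Sandwich.reg {γ lam C : ℝ} {F : X → A → ℝ} {P : X → A → X} {Q : X → A → A}
    (h : Sandwich γ lam C F P Q) (hγ : 0 < γ) {K : ℝ} (hK : 0 ≤ K)
    {Z : X → A → X} (hZ : ∀ x a, IsMinP K F x a (Z x a)) :
    Sandwich 0 lam C (lipReg K F) (fun x a => P (Z x a) a) (fun x a => Q (Z x a) a) := by
  intro x x' a a'
  rw [(hZ x a).lipReg_eq]
  constructor
  · rw [(hZ x' a').lipReg_eq]
    have h1 := (h (Z x a) (Z x' a') a a').1
    have h2 := h.subgrad hK (hZ x a) (x' - Z x' a')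
    have h3 : x' - Z x' a' - (x - Z x a) = (x' - x) - (Z x' a' - Z x a) := by abel
    rw [h3, inner_sub_left] at h2
    have h5 : 0 ≤ γ * ‖Z x' a' - Z x a‖ ^ 2 := by positivity
    linarith
  · refine ((hZ x' a').lipReg_le (Z x a + (x' - x))).trans ?_
    have h1 := (h (Z x a) (Z x a + (x' - x)) a a').2
    rw [add_sub_cancel_left] at h1
    have h3 : x' - (Z x a + (x' - x)) = x - Z x a := by abel
    rw [h3]
    linarith

theorem lipReg_half {γ lam C c K S m w : ℝ} {F F' : X → A → ℝ} {P : X → A → X} {Q : X → A → A}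
    (h : Sandwich γ lam C F P Q) (hγ : 0 < γ) (hK : 0 ≤ K) (hc : 0 ≤ c) (hm : 0 ≤ m) (hw : 0 ≤ w)
    {x x' : X} {a a' : A} (hP : ‖P x a‖ ≤ 2 * c * S)
    (hS : S = 1 + ‖(x', a')‖ + ‖(x, a)‖ + m)
    (hF : ∀ x x', F' x' a' - F x a ≤
      c * (1 + ‖(x', a')‖ + ‖(x, a)‖ + m) * (‖(x' - x, a' - a)‖ + w))
    {z z' : X} (hz : IsMinP K F x a z) (hz' : IsMinP K F' x' a' z') :
    lipReg K F' x' a' - lipReg K F x a ≤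
      c * (1 + 4 * c / γ) * S * (‖(x' - x, a' - a)‖ + w) := by
  have h1 := hz'.lipReg_le (z + (x' - x))
  rw [hz.lipReg_eq]
  have h3 : x' - (z + (x' - x)) = x - z := by abel
  rw [h3] at h1
  have h2 := hF z (z + (x' - x))
  rw [add_sub_cancel_left] at h2
  have h4 : ‖z - x‖ ≤ 2 * c / γ * S := by
    refine (h.min_bound hγ hK hz).trans ?_
    rw [div_le_iff₀ hγ]
    calc _ ≤ _ := hP
      _ = _ := by field_simp
  have h5 : ‖(z, a)‖ ≤ ‖(x, a)‖ + ‖z - x‖ := by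
    have : ((z, a) : X × A) = (x, a) + (z - x, 0) := by simp
    rw [this]
    refine (norm_add_le _ _).trans ?_
    simp [Prod.norm_mk]
  have h6 : ‖(z + (x' - x), a')‖ ≤ ‖(x', a')‖ + ‖z - x‖ := by
    have : ((z + (x' - x), a') : X × A) = (x', a') + (z - x, 0) := by
      ext <;> simp; abel
    rw [this]
    refine (norm_add_le _ _).trans ?_
    simp [Prod.norm_mk]
  have h7 : 1 + ‖(z + (x' - x), a')‖ + ‖(z, a)‖ + m ≤ (1 + 4 * c / γ) * S := by
    have : 4 * c / γ = 2 * (2 * c / γ) := by ring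
    rw [this]; linarith
  calc _ ≤ F' (z + (x' - x)) a' - F z a := by linarith
    _ ≤ _ := h2
    _ ≤ c * ((1 + 4 * c / γ) * S) * (‖(x' - x, a' - a)‖ + w) := by gcongr
    _ = _ := by ring

end Abstract

section Measures

variable {d : ℕ}

theorem M2_nonneg (μ : Measure (Vec d)) : 0 ≤ M2 μ := Real.sqrt_nonneg _

theorem M2_sq (μ : Measure (Vec d)) : M2 μ ^ 2 = ∫ x, ‖x‖ ^ 2 ∂μ :=
  Real.sq_sqrt (integral_nonneg fun _ => by positivity)

theorem isP2_dirac (x : Vec d) : IsP2 (Measure.dirac x) :=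
  ⟨inferInstance, integrable_dirac (by simp)⟩

theorem M2_dirac (x : Vec d) : M2 (Measure.dirac x) = ‖x‖ := by
  rw [M2, integral_dirac, Real.sqrt_sq (norm_nonneg _)]

/-- Scaling factor of the projection onto the ball of radius `n` of `P₂`. -/
def scl (n : ℝ) (μ : Measure (Vec d)) : ℝ := n / max n (M2 μ)

/-- Projection onto the ball of radius `n` of `P₂`. -/
def Phi (n : ℝ) (μ : Measure (Vec d)) : Measure (Vec d) := μ.map (fun y => scl n μ • y)

theorem scl_pos {n : ℝ} (hn : 0 < n) (μ : Measure (Vec d)) : 0 < scl n μ :=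
  div_pos hn (lt_max_of_lt_left hn)

theorem scl_le_one {n : ℝ} (hn : 0 < n) (μ : Measure (Vec d)) : scl n μ ≤ 1 :=
  (div_le_one (lt_max_of_lt_left hn)).2 (le_max_left _ _)

theorem scl_mul {n : ℝ} (hn : 0 < n) (μ : Measure (Vec d)) : scl n μ * M2 μ = min n (M2 μ) := by
  rw [scl]
  rcases le_total n (M2 μ) with h | h
  · rw [max_eq_right h, min_eq_left h]
    have : M2 μ ≠ 0 := by linarith
    field_simp
  · rw [max_eq_left h, min_eq_right h]
    field_simp

theorem Phi_eq {n : ℝ} (hn : 0 < n) {μ : Measure (Vec d)} (h : M2 μ ≤ n) : Phi n μ = μ := by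
  have : scl n μ = 1 := by rw [scl, max_eq_left h, div_self hn.ne']
  rw [Phi, this]
  simp

theorem meas_smul (s : ℝ) : Measurable fun y : Vec d => s • y := measurable_const_smul s

theorem isP2_Phi (n : ℝ) {μ : Measure (Vec d)} (h : IsP2 μ) : IsP2 (Phi n μ) := by
  obtain ⟨h1, h2⟩ := h
  refine ⟨Measure.isProbabilityMeasure_map (meas_smul _).aemeasurable, ?_⟩
  rw [Phi, integrable_map_measure (by fun_prop) (meas_smul _).aemeasurable]
  have : ((fun x : Vec d => ‖x‖ ^ 2) ∘ fun y => scl n μ • y) =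
      fun y => ‖scl n μ‖ ^ 2 * ‖y‖ ^ 2 := by
    ext y; simp [norm_smul, mul_pow]
  rw [this]
  exact h2.const_mul _

theorem M2_Phi {n : ℝ} (hn : 0 < n) (μ : Measure (Vec d)) : M2 (Phi n μ) = min n (M2 μ) := by
  rw [← scl_mul hn, M2, Phi, integral_map (meas_smul _).aemeasurable (by fun_prop)]
  have : (fun y : Vec d => ‖scl n μ • y‖ ^ 2) = fun y => scl n μ ^ 2 * ‖y‖ ^ 2 := by
    ext y; simp [norm_smul, mul_pow]
  rw [this, integral_const_mul, Real.sqrt_mul (by positivity), Real.sqrt_sq (scl_pos hn μ).le, M2]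

theorem Phi_dirac (n : ℝ) (x : Vec d) :
    Phi n (Measure.dirac x) = Measure.dirac (scl n (Measure.dirac x) • x) := by
  rw [Phi]
  exact Measure.map_dirac' (meas_smul _) x

theorem W2_bdd (μ ν : Measure (Vec d)) : BddBelow { r : ℝ | ∃ p : Measure (Vec d × Vec d),
    p.map Prod.fst = μ ∧ p.map Prod.snd = ν ∧
    r = Real.sqrt (∫ q, ‖q.1 - q.2‖ ^ 2 ∂p) } :=
  ⟨0, by rintro r ⟨p, _, _, rfl⟩; exact Real.sqrt_nonneg _⟩

theorem W2_nonneg (μ ν : Measure (Vec d)) : 0 ≤ W2 μ ν :=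
  Real.sInf_nonneg (by rintro r ⟨p, _, _, rfl⟩; exact Real.sqrt_nonneg _)

theorem W2_le {μ ν : Measure (Vec d)} (p : Measure (Vec d × Vec d))
    (h1 : p.map Prod.fst = μ) (h2 : p.map Prod.snd = ν) :
    W2 μ ν ≤ Real.sqrt (∫ q, ‖q.1 - q.2‖ ^ 2 ∂p) :=
  csInf_le (W2_bdd μ ν) ⟨p, h1, h2, rfl⟩

theorem W2_self (μ : Measure (Vec d)) : W2 μ μ = 0 := by
  refine le_antisymm ?_ (W2_nonneg _ _)
  have hm : Measurable fun x : Vec d => (x, x) := by fun_prop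
  refine (W2_le (μ.map fun x => (x, x)) ?_ ?_).trans ?_
  · rw [Measure.map_map measurable_fst hm]; exact Measure.map_id
  · rw [Measure.map_map measurable_snd hm]; exact Measure.map_id
  · rw [integral_map hm.aemeasurable (by fun_prop)]; simp

theorem W2_dirac_zero {μ : Measure (Vec d)} (h : IsP2 μ) : W2 μ (Measure.dirac 0) ≤ M2 μ := by
  have := h.1
  have hm : Measurable fun x : Vec d => (x, (0 : Vec d)) := by fun_prop
  refine (W2_le (μ.map fun x => (x, 0)) ?_ ?_).trans ?_
  · rw [Measure.map_map measurable_fst hm]; exact Measure.map_id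
  · rw [Measure.map_map measurable_snd hm]
    have : (Prod.snd ∘ fun x : Vec d => (x, (0 : Vec d))) = fun _ => 0 := rfl
    rw [this, Measure.map_const]; simp
  · rw [integral_map hm.aemeasurable (by fun_prop)]; simp [M2]

theorem W2_Phi {n : ℝ} (hn : 0 < n) {μ ν : Measure (Vec d)} (hμ : IsP2 μ) (hν : IsP2 ν) :
    W2 (Phi n μ) (Phi n ν) ≤ W2 μ ν := by
  have := hμ.1
  have := hν.1
  refine le_csInf ⟨_, μ.prod ν, by simp, by simp, rfl⟩ ?_
  rintro r ⟨p, hp1, hp2, rfl⟩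
  set s := scl n μ
  set s' := scl n ν
  have hm : Measurable fun q : Vec d × Vec d => (s • q.1, s' • q.2) := by fun_prop
  refine (W2_le (p.map fun q => (s • q.1, s' • q.2)) ?_ ?_).trans ?_
  · rw [Measure.map_map measurable_fst hm, Phi, ← hp1, Measure.map_map (by fun_prop) measurable_fst]
    rw [hp1]; rfl
  · rw [Measure.map_map measurable_snd hm, Phi, ← hp2, Measure.map_map (by fun_prop) measurable_snd]
    rw [hp2]; rfl
  apply Real.sqrt_le_sqrt
  rw [integral_map hm.aemeasurable (by fun_prop)]
  have i1 : Integrable (fun q : Vec d × Vec d => ‖q.1‖ ^ 2) p := by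
    have h := hμ.2
    rw [← hp1, integrable_map_measure (by fun_prop) measurable_fst.aemeasurable] at h
    exact h
  have i2 : Integrable (fun q : Vec d × Vec d => ‖q.2‖ ^ 2) p := by
    have h := hν.2
    rw [← hp2, integrable_map_measure (by fun_prop) measurable_snd.aemeasurable] at h
    exact h
  have e1 : ∫ q, ‖q.1‖ ^ 2 ∂p = M2 μ ^ 2 := by
    rw [M2_sq, ← hp1, integral_map measurable_fst.aemeasurable (by fun_prop)]
  have e2 : ∫ q, ‖q.2‖ ^ 2 ∂p = M2 ν ^ 2 := by
    rw [M2_sq, ← hp2, integral_map measurable_snd.aemeasurable (by fun_prop)]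
  have i3 : Integrable (fun q : Vec d × Vec d => ⟪q.1, q.2⟫) p := by
    refine (i1.add i2).mono' (by fun_prop) (Filter.Eventually.of_forall fun q => ?_)
    have h1 := abs_real_inner_le_norm q.1 q.2
    rw [Real.norm_eq_abs]
    simp only [Pi.add_apply]
    nlinarith [sq_nonneg (‖q.1‖ - ‖q.2‖), sq_nonneg (‖q.1‖), sq_nonneg (‖q.2‖)]
  set c := ∫ q, ⟪q.1, q.2⟫ ∂p with hc
  have exp : ∀ u v : ℝ, ∫ q, ‖u • q.1 - v • q.2‖ ^ 2 ∂p =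
      u ^ 2 * M2 μ ^ 2 + v ^ 2 * M2 ν ^ 2 - 2 * u * v * c := by
    intro u v
    have : (fun q : Vec d × Vec d => ‖u • q.1 - v • q.2‖ ^ 2) =
        fun q => u ^ 2 * ‖q.1‖ ^ 2 + v ^ 2 * ‖q.2‖ ^ 2 - 2 * u * v * ⟪q.1, q.2⟫ := by
      ext q
      rw [norm_sub_sq_real, norm_smul, norm_smul, real_inner_smul_left, real_inner_smul_right,
        mul_pow, mul_pow, Real.norm_eq_abs, Real.norm_eq_abs, sq_abs, sq_abs]
      ring
    have i12 : Integrable (fun q : Vec d × Vec d => u ^ 2 * ‖q.1‖ ^ 2 + v ^ 2 * ‖q.2‖ ^ 2) p :=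
      (i1.const_mul _).add (i2.const_mul _)
    rw [this, integral_sub i12 (i3.const_mul _),
      integral_add (i1.const_mul _) (i2.const_mul _), integral_const_mul, integral_const_mul,
      integral_const_mul, e1, e2]
  have hcs : c ≤ M2 μ * M2 ν := by
    have h1 : discrim (M2 ν ^ 2) (-2 * c) (M2 μ ^ 2) ≤ 0 := by
      apply discrim_le_zero
      intro t
      have h2 : 0 ≤ ∫ q, ‖(1 : ℝ) • q.1 - t • q.2‖ ^ 2 ∂p :=
        integral_nonneg fun _ => by positivity
      rw [exp] at h2
      linarith
    rw [discrim] at h1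
    exact abs_le_of_sq_le_sq' (by nlinarith) (mul_nonneg (M2_nonneg _) (M2_nonneg _)) |>.2
  have h1 := exp 1 1
  simp only [one_smul] at h1
  have h2 := exp s s'
  simp only [h1, h2]
  have hs : 0 < s := scl_pos hn μ
  have hs' : 0 < s' := scl_pos hn ν
  have hs1 : s ≤ 1 := scl_le_one hn μ
  have hs1' : s' ≤ 1 := scl_le_one hn ν
  have h3 : 0 ≤ (1 - s * s') * (M2 μ * M2 ν - c) :=
    mul_nonneg (by nlinarith) (by linarith)
  have h4 : (s * M2 μ - s' * M2 ν) ^ 2 ≤ (M2 μ - M2 ν) ^ 2 := by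
    rw [scl_mul hn, scl_mul hn, sq_le_sq]
    simpa using abs_min_sub_min_le_max n (M2 μ) n (M2 ν)
  nlinarith

end Measures

section Regularization

variable {X A : Type*} [NormedAddCommGroup X] [InnerProductSpace ℝ X] [FiniteDimensional ℝ X]
  [NormedAddCommGroup A] [InnerProductSpace ℝ A] [FiniteDimensional ℝ A]

theorem Sandwich.exists_reg {γ lam C : ℝ} {F : X → A → ℝ} {P : X → A → X} {Q : X → A → A}
    (h : Sandwich γ lam C F P Q) (hγ : 0 < γ) (hlam : 0 ≤ lam) {K : ℝ} (hK : 0 ≤ K) :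
    ∃ Z : X → A → X, (∀ x a, IsMinP K F x a (Z x a)) ∧ (∀ x a, ‖P x a‖ ≤ K → Z x a = x) ∧
      Sandwich 0 lam C (lipReg K F) (fun x a => P (Z x a) a) (fun x a => Q (Z x a) a) := by
  have h1 : ∀ x a, ∃ z, IsMinP K F x a z ∧ (‖P x a‖ ≤ K → z = x) := by
    intro x a
    by_cases hP : ‖P x a‖ ≤ K
    · exact ⟨x, h.min_self hγ hP, fun _ => rfl⟩
    · obtain ⟨z, hz⟩ := h.exists_min hγ hlam hK x a
      exact ⟨z, hz, fun h => absurd h hP⟩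
  choose Z hZ hZ' using h1
  exact ⟨Z, hZ, hZ', h.reg hγ hK hZ⟩

/-- The regularized function agrees with the original one where the gradient is small. -/
theorem Sandwich.reg_eq {γ lam C : ℝ} {F : X → A → ℝ} {P : X → A → X} {Q : X → A → A}
    (h : Sandwich γ lam C F P Q) (hγ : 0 < γ) {K : ℝ} {x : X} {a : A} (hP : ‖P x a‖ ≤ K) :
    lipReg K F x a = F x a := by
  rw [(h.min_self hγ hP).lipReg_eq]; simp

/-- Gradient bound coming from the local Lipschitz property. -/
theorem Sandwich.grad_growth {γ lam C c m : ℝ} {F : X → A → ℝ} {P : X → A → X} {Q : X → A → A}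
    (h : Sandwich γ lam C F P Q) (hγ : 0 < γ) (hc : 0 < c) (hm : 0 ≤ m) (x : X) (a : A)
    (hF : ∀ x', |F x' a - F x a| ≤ c * (1 + ‖(x', a)‖ + ‖(x, a)‖ + m) * ‖x' - x‖) :
    ‖P x a‖ ≤ c * (1 + 2 * ‖(x, a)‖ + m) := by
  by_contra! hlt
  have hp : 0 < ‖P x a‖ ∨ P x a = 0 := by
    rcases eq_or_ne (P x a) 0 with h0 | h0
    · exact Or.inr h0
    · exact Or.inl (norm_pos_iff.2 h0)
  rcases hp with hp | hp
  · set B := c * (1 + 2 * ‖(x, a)‖ + m) with hB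
    set ε := (‖P x a‖ - B) / (2 * c) with hε
    have hε0 : 0 < ε := div_pos (by linarith) (by positivity)
    set u := (ε / ‖P x a‖) • P x a with hu
    have hun : ‖u‖ = ε := by
      rw [hu, norm_smul, Real.norm_of_nonneg (by positivity)]; field_simp
    have h1 := (h x (x + u) a a).1
    have h2 := (abs_le.1 (hF (x + u))).2
    rw [add_sub_cancel_left] at h1 h2
    simp only [sub_self, inner_zero_left, norm_zero] at h1
    have h3 : ⟪u, P x a⟫ = ε * ‖P x a‖ := by
      rw [hu, real_inner_smul_left, real_inner_self_eq_norm_sq]; field_simp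
    have h4 : ‖(x + u, a)‖ ≤ ‖(x, a)‖ + ε := by
      have : ((x + u, a) : X × A) = (x, a) + (u, 0) := by simp
      rw [this]
      refine (norm_add_le _ _).trans ?_
      simp [Prod.norm_mk, hun, hε0.le]
    rw [h3, hun] at h1
    rw [hun] at h2
    have h5 : c * (1 + ‖(x + u, a)‖ + ‖(x, a)‖ + m) * ε ≤ (B + c * ε) * ε := by
      apply mul_le_mul_of_nonneg_right _ hε0.le
      rw [hB]
      nlinarith
    have h6 : 0 ≤ γ * ε ^ 2 := by positivity
    have h7 : ε * ‖P x a‖ ≤ ε * (B + c * ε) := by nlinarith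
    have h8 := le_of_mul_le_mul_left h7 hε0
    have h9 : c * ε = (‖P x a‖ - B) / 2 := by rw [hε]; field_simp
    linarith
  · rw [hp, norm_zero] at hlt
    exact absurd hlt (not_lt.2 (by positivity))

theorem convexOn_of_subgrad {G : X → ℝ} {D : X → X}
    (h : ∀ x x', G x + ⟪x' - x, D x⟫ ≤ G x') : ConvexOn ℝ Set.univ G := by
  refine ⟨convex_univ, fun x _ y _ s t hs ht hst => ?_⟩
  have h1 := h (s • x + t • y) x
  have h2 := h (s • x + t • y) y
  set w := s • x + t • y with hw
  have h3 : s * ⟪x - w, D w⟫ + t * ⟪y - w, D w⟫ = 0 := by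
    rw [← real_inner_smul_left, ← real_inner_smul_left, ← inner_add_left]
    have : s • (x - w) + t • (y - w) = 0 := by
      have ht' : t = 1 - s := by linarith
      rw [hw, ht']; module
    rw [this, inner_zero_left]
  have h4 := mul_le_mul_of_nonneg_left h1 hs
  have h5 := mul_le_mul_of_nonneg_left h2 ht
  simp only [smul_eq_mul]
  have h6 : G w = s * G w + t * G w := by rw [← add_mul, hst, one_mul]
  linarith

theorem lipReg_abs {γ lam C c K m w : ℝ} {F F' : X → A → ℝ} {P P' : X → A → X}
    {Q Q' : X → A → A}
    (h : Sandwich γ lam C F P Q) (h' : Sandwich γ lam C F' P' Q')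
    (hγ : 0 < γ) (hlam : 0 ≤ lam) (hK : 0 ≤ K) (hc : 0 ≤ c) (hm : 0 ≤ m)
    (hw : 0 ≤ w) {x x' : X} {a a' : A}
    (hP : ‖P x a‖ ≤ c * (1 + 2 * ‖(x, a)‖ + 2 * m))
    (hP' : ‖P' x' a'‖ ≤ c * (1 + 2 * ‖(x', a')‖ + 2 * m))
    (hF : ∀ x x', |F' x' a' - F x a| ≤
      c * (1 + ‖(x', a')‖ + ‖(x, a)‖ + m) * (‖(x' - x, a' - a)‖ + w)) :
    |lipReg K F' x' a' - lipReg K F x a| ≤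
      c * (1 + 4 * c / γ) * (1 + ‖(x', a')‖ + ‖(x, a)‖ + m) * (‖(x' - x, a' - a)‖ + w) := by
  obtain ⟨z, hz⟩ := h.exists_min hγ hlam hK x a
  obtain ⟨z', hz'⟩ := h'.exists_min hγ hlam hK x' a'
  have n1 : 0 ≤ ‖(x, a)‖ := norm_nonneg _
  have n2 : 0 ≤ ‖(x', a')‖ := norm_nonneg _
  have nr : ∀ y y' : X, ‖(y - y', a - a')‖ = ‖(y' - y, a' - a)‖ := by
    intro y y'
    rw [← norm_neg (y - y', a - a'), Prod.neg_mk, neg_sub, neg_sub]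
  rw [abs_sub_le_iff]
  constructor
  · refine lipReg_half h hγ hK hc hm hw ?_ rfl (fun y y' => (le_abs_self _).trans (hF y y')) hz hz'
    nlinarith
  · rw [← nr, add_right_comm 1 ‖(x', a')‖]
    refine lipReg_half h' hγ hK hc hm hw ?_ rfl (fun y y' => ?_) hz' hz
    · nlinarith
    · rw [nr, add_right_comm 1 ‖(y', a)‖]
      have := hF y' y
      rw [abs_sub_comm] at this
      exact (le_abs_self _).trans this

end Regularization

section Final

variable {T : ℝ} {d k : ℕ} {lam γ : ℝ} {cL : ℝ≥0}
  {f : ℝ → Vec d → Measure (Vec d) → Vec k → ℝ} {g : Vec d → Measure (Vec d) → ℝ}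

theorem f_sandwich (hlam : 0 < lam) (hγ : 0 < γ) (hA2 : CondA2 T d k lam cL f)
    (hf : ∀ t ∈ Set.Icc (0:ℝ) T, ∀ μ : Measure (Vec d), IsP2 μ →
          ∀ (x x' : Vec d) (a a' : Vec k),
            f t x' μ a' - f t x μ a - ⟪x' - x, gradient (fun z => f t z μ a) x⟫
              - ⟪a' - a, gradient (fun b => f t x μ b) a⟫
            ≥ γ * ‖x' - x‖ ^ 2 + lam * ‖a' - a‖ ^ 2)
    {t : ℝ} (ht : t ∈ Set.Icc (0:ℝ) T) {μ : Measure (Vec d)} (hμ : IsP2 μ) :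
    Sandwich γ lam (2 * cL) (fun x a => f t x μ a) (fun x a => gradient (fun z => f t z μ a) x)
      (fun x a => gradient (fun b => f t x μ b) a) :=
  sandwich_of_lower hγ.le hlam.le (hf t ht μ hμ) (hA2 t ht μ hμ).2.1

theorem g_sandwich (hlam : 0 < lam) (hγ : 0 < γ) (hA4 : CondA4 d cL g)
    (hg : ∀ μ : Measure (Vec d), IsP2 μ → ∀ x x' : Vec d,
          g x' μ - g x μ - ⟪x' - x, gradient (fun z => g z μ) x⟫ ≥ γ * ‖x' - x‖ ^ 2)
    {μ : Measure (Vec d)} (hμ : IsP2 μ) :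
    Sandwich γ lam (2 * cL) (fun x (_ : Vec 0) => g x μ)
      (fun x (_ : Vec 0) => gradient (fun z => g z μ) x) (fun _ _ => (0 : Vec 0)) := by
  refine sandwich_of_lower hγ.le hlam.le (fun x x' a a' => ?_) ?_
  · have h1 := hg μ hμ x x'
    have h2 : a' - a = 0 := Subsingleton.elim _ _
    rw [h2]
    simpa using h1
  · refine LipschitzWith.of_dist_le_mul fun p q => ?_
    have h1 := (hA4.2 μ hμ).2.2.dist_le_mul p.1 q.1
    rw [Prod.dist_eq, Prod.dist_eq, Subsingleton.elim p.2 q.2]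
    simpa using h1

theorem f_growth (hcL : 0 < cL) (hγ : 0 < γ) (hA5 : CondA5 T d k cL f g)
    {t : ℝ} (ht : t ∈ Set.Icc (0:ℝ) T) {μ : Measure (Vec d)} (hμ : IsP2 μ)
    {P : Vec d → Vec k → Vec d} {Q : Vec d → Vec k → Vec k} {C : ℝ}
    (h : Sandwich γ lam C (fun x a => f t x μ a) P Q) (x : Vec d) (a : Vec k) :
    ‖P x a‖ ≤ cL * (1 + 2 * ‖(x, a)‖ + 2 * M2 μ) := by
  refine h.grad_growth hγ (NNReal.coe_pos.2 hcL) (by linarith [M2_nonneg μ]) x a fun x' => ?_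
  have h1 := hA5.2.1 t ht x x' a a μ μ hμ hμ
  rw [W2_self, sub_self, Prod.norm_mk (x' - x), norm_zero, max_eq_left (norm_nonneg _), add_zero] at h1
  refine h1.trans (le_of_eq ?_)
  ring

theorem norm_mk_zero0 (x : Vec d) (a : Vec 0) : ‖(x, a)‖ = ‖x‖ := by
  rw [Subsingleton.elim a 0, Prod.norm_mk, norm_zero, max_eq_left (norm_nonneg _)]

theorem g_growth (hcL : 0 < cL) (hγ : 0 < γ) (hA5 : CondA5 T d k cL f g)
    {μ : Measure (Vec d)} (hμ : IsP2 μ)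
    {P : Vec d → Vec 0 → Vec d} {Q : Vec d → Vec 0 → Vec 0} {C : ℝ}
    (h : Sandwich γ lam C (fun x _ => g x μ) P Q) (x : Vec d) (a : Vec 0) :
    ‖P x a‖ ≤ cL * (1 + 2 * ‖(x, a)‖ + 2 * M2 μ) := by
  refine h.grad_growth hγ (NNReal.coe_pos.2 hcL) (by linarith [M2_nonneg μ]) x a fun x' => ?_
  have h1 := hA5.2.2 x x' μ μ hμ hμ
  rw [W2_self, add_zero] at h1
  rw [norm_mk_zero0, norm_mk_zero0]
  refine h1.trans (le_of_eq ?_)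
  ring

/-- The mean-reverting bound is stable under the projection `Phi`. -/
theorem mean_rev {n c : ℝ} (hn : 1 ≤ n) (hc : 0 ≤ c) (x v : Vec d)
    (h : ⟪scl n (Measure.dirac x) • x, v⟫ ≥ -c * (1 + ‖scl n (Measure.dirac x) • x‖)) :
    ⟪x, v⟫ ≥ -(2 * c) * (1 + ‖x‖) := by
  have hn0 : 0 < n := by linarith
  have hs := scl_pos hn0 (Measure.dirac x)
  have hs2 : 1 ≤ scl n (Measure.dirac x) * (1 + ‖x‖) := by
    rw [scl, M2_dirac, div_mul_eq_mul_div, le_div_iff₀ (lt_max_of_lt_left hn0), one_mul]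
    have := norm_nonneg x
    apply max_le <;> nlinarith
  set s := scl n (Measure.dirac x)
  rw [real_inner_smul_left, norm_smul, Real.norm_of_nonneg hs.le] at h
  have h1 : c * 1 ≤ c * (s * (1 + ‖x‖)) := mul_le_mul_of_nonneg_left hs2 hc
  have h2 : s * (-(2 * c) * (1 + ‖x‖)) ≤ s * ⟪x, v⟫ := by
    nlinarith [norm_nonneg x, mul_nonneg hc hs.le]
  exact le_of_mul_le_mul_left h2 hs

theorem main_aux (hlam : 0 < lam) (hcL : 0 < cL) (hγ : 0 < γ) (c' : ℝ≥0)
    (hc1 : 4 * (cL : ℝ) ≤ c') (hc2 : (cL : ℝ) * (1 + 4 * cL / γ) ≤ c')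
    (hA : CostAssumptions T d k lam cL f g)
    (hf : ∀ t ∈ Set.Icc (0:ℝ) T, ∀ μ : Measure (Vec d), IsP2 μ →
          ∀ (x x' : Vec d) (a a' : Vec k),
            f t x' μ a' - f t x μ a - ⟪x' - x, gradient (fun z => f t z μ a) x⟫
              - ⟪a' - a, gradient (fun b => f t x μ b) a⟫
            ≥ γ * ‖x' - x‖ ^ 2 + lam * ‖a' - a‖ ^ 2)
    (hg : ∀ μ : Measure (Vec d), IsP2 μ → ∀ x x' : Vec d,
          g x' μ - g x μ - ⟪x' - x, gradient (fun z => g z μ) x⟫ ≥ γ * ‖x' - x‖ ^ 2)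
    (n K : ℝ) (hn : 1 ≤ n) (hKn : K = cL * (1 + 4 * n))
    (fn : ℝ → Vec d → Measure (Vec d) → Vec k → ℝ) (gn : Vec d → Measure (Vec d) → ℝ)
    (hfn : fn = fun t x μ a => lipReg K (fun z b => f t z (Phi n μ) b) x a)
    (hgn : gn = fun x μ => lipReg K (fun z (_ : Vec 0) => g z (Phi n μ)) x 0) :
    CostAssumptions T d k lam c' fn gn ∧
    (∀ t ∈ Set.Icc (0:ℝ) T, ∀ (x : Vec d) (a : Vec k) (μ : Measure (Vec d)), IsP2 μ →
      ‖gradient (fun z => fn t z μ a) x‖ ≤ K ∧ ‖gradient (fun z => gn z μ) x‖ ≤ K) ∧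
    (∀ t ∈ Set.Icc (0:ℝ) T, ∀ (x : Vec d) (a : Vec k) (μ : Measure (Vec d)),
      IsP2 μ → ‖x‖ ≤ n → ‖a‖ ≤ n → M2 μ ≤ n → fn t x μ a = f t x μ a ∧ gn x μ = g x μ) := by
  obtain ⟨hA2, hA2loc, hA4, hA5, hA6, hA7⟩ := hA
  have hn0 : 0 < n := by linarith
  have hc0 : (0 : ℝ) < cL := NNReal.coe_pos.2 hcL
  have hK : 0 ≤ K := by rw [hKn]; positivity
  have hFS : ∀ t ∈ Set.Icc (0:ℝ) T, ∀ μ : Measure (Vec d), IsP2 μ → _ :=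
    fun t ht μ hμ => f_sandwich hlam hγ hA2 hf ht hμ
  have hGS : ∀ μ : Measure (Vec d), IsP2 μ → _ :=
    fun μ hμ => g_sandwich hlam hγ hA4 hg hμ
  have hFP : ∀ t ∈ Set.Icc (0:ℝ) T, ∀ μ : Measure (Vec d), IsP2 μ → ∀ x a, _ :=
    fun t ht μ hμ x a => f_growth hcL hγ hA5 ht hμ (hFS t ht μ hμ) x a
  have hGP : ∀ μ : Measure (Vec d), IsP2 μ → ∀ x a, _ :=
    fun μ hμ x a => g_growth hcL hγ hA5 hμ (hGS μ hμ) x a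
  have hPhi : ∀ μ : Measure (Vec d), M2 (Phi n μ) ≤ n ∧ M2 (Phi n μ) ≤ M2 μ := fun μ => by
    rw [M2_Phi hn0]; exact ⟨min_le_left _ _, min_le_right _ _⟩
  have hd0 : Phi n (Measure.dirac (0 : Vec d)) = Measure.dirac 0 :=
    Phi_eq hn0 (by rw [M2_dirac, norm_zero]; exact hn0.le)
  -- regularized sandwiches
  have hRF : ∀ t ∈ Set.Icc (0:ℝ) T, ∀ μ : Measure (Vec d), IsP2 μ →
      ∃ Z : Vec d → Vec k → Vec d,
        (∀ x a, IsMinP K (fun z b => f t z (Phi n μ) b) x a (Z x a)) ∧ (∀ x a,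
          ‖gradient (fun z => f t z (Phi n μ) a) x‖ ≤ K → Z x a = x) ∧
        Sandwich 0 lam (2 * cL) (fun x a => fn t x μ a)
          (fun x a => gradient (fun z => f t z (Phi n μ) a) (Z x a))
          (fun x a => gradient (fun b => f t (Z x a) (Phi n μ) b) a) := by
    intro t ht μ hμ
    rw [hfn]
    exact (hFS t ht _ (isP2_Phi n hμ)).exists_reg hγ hlam.le hK
  have hRG : ∀ μ : Measure (Vec d), IsP2 μ →
      ∃ Z : Vec d → Vec 0 → Vec d,
        (∀ x a, IsMinP K (fun z b => g z (Phi n μ)) x a (Z x a)) ∧ (∀ x a,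
          ‖gradient (fun z => g z (Phi n μ)) x‖ ≤ K → Z x a = x) ∧
        Sandwich 0 lam (2 * cL) (fun x (_ : Vec 0) => gn x μ)
          (fun x a => gradient (fun z => g z (Phi n μ)) (Z x a))
          (fun x a => (0 : Vec 0)) := by
    intro μ hμ
    rw [hgn]
    obtain ⟨Z, h1, h2, h3⟩ := (hGS _ (isP2_Phi n hμ)).exists_reg hγ hlam.le hK
    refine ⟨Z, h1, h2, fun x x' a a' => ?_⟩
    have := h3 x x' a a'
    rw [Subsingleton.elim a 0, Subsingleton.elim a' 0] at this ⊢
    exact this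
  -- gradients at the origin
  have hF0 : ∀ t ∈ Set.Icc (0:ℝ) T, ∀ μ : Measure (Vec d), IsP2 μ →
      ‖gradient (fun z => f t z (Phi n μ) 0) 0‖ ≤ K := by
    intro t ht μ hμ
    refine (hFP t ht _ (isP2_Phi n hμ) 0 0).trans ?_
    have := (hPhi μ).1
    rw [hKn, Prod.norm_mk, norm_zero, norm_zero, max_self]
    exact mul_le_mul_of_nonneg_left (by linarith) hc0.le
  have hG0 : ∀ μ : Measure (Vec d), IsP2 μ → ‖gradient (fun z => g z (Phi n μ)) 0‖ ≤ K := by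
    intro μ hμ
    refine (hGP _ (isP2_Phi n hμ) 0 0).trans ?_
    have := (hPhi μ).1
    rw [hKn, Prod.norm_mk, norm_zero, norm_zero, max_self]
    exact mul_le_mul_of_nonneg_left (by linarith) hc0.le
  have hF0g : ∀ t ∈ Set.Icc (0:ℝ) T, ∀ μ : Measure (Vec d), IsP2 μ →
      gradient (fun z => fn t z μ 0) 0 = gradient (fun z => f t z (Phi n μ) 0) 0 := by
    intro t ht μ hμ
    obtain ⟨Z, h1, h2, h3⟩ := hRF t ht μ hμ
    rw [h3.gradient_fst le_rfl hlam.le, h2 0 0 (hF0 t ht μ hμ)]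
  have hG0g : ∀ μ : Measure (Vec d), IsP2 μ →
      gradient (fun z => gn z μ) 0 = gradient (fun z => g z (Phi n μ)) 0 := by
    intro μ hμ
    obtain ⟨Z, h1, h2, h3⟩ := hRG μ hμ
    rw [h3.gradient_fst le_rfl hlam.le 0 0, h2 0 0 (hG0 μ hμ)]
  -- bounded gradients
  have hB : ∀ t ∈ Set.Icc (0:ℝ) T, ∀ (x : Vec d) (a : Vec k) (μ : Measure (Vec d)), IsP2 μ →
      ‖gradient (fun z => fn t z μ a) x‖ ≤ K ∧ ‖gradient (fun z => gn z μ) x‖ ≤ K := by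
    intro t ht x a μ hμ
    constructor
    · obtain ⟨Z, h1, h2, h3⟩ := hRF t ht μ hμ
      rw [h3.gradient_fst le_rfl hlam.le]
      exact (hFS t ht _ (isP2_Phi n hμ)).grad_bound hK (h1 x a)
    · obtain ⟨Z, h1, h2, h3⟩ := hRG μ hμ
      rw [h3.gradient_fst le_rfl hlam.le x 0]
      exact (hGS _ (isP2_Phi n hμ)).grad_bound hK (h1 x 0)
  -- coincidence
  have hco : ∀ t ∈ Set.Icc (0:ℝ) T, ∀ (x : Vec d) (a : Vec k) (μ : Measure (Vec d)),
      IsP2 μ → ‖x‖ ≤ n → ‖a‖ ≤ n → M2 μ ≤ n → fn t x μ a = f t x μ a ∧ gn x μ = g x μ := by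
    intro t ht x a μ hμ hx ha hm
    constructor
    · rw [hfn]
      simp only [Phi_eq hn0 hm]
      refine (hFS t ht μ hμ).reg_eq hγ ((hFP t ht μ hμ x a).trans ?_)
      have : ‖(x, a)‖ ≤ n := max_le hx ha
      rw [hKn]; exact mul_le_mul_of_nonneg_left (by linarith) hc0.le
    · rw [hgn]
      simp only [Phi_eq hn0 hm]
      refine (hGS μ hμ).reg_eq hγ ((hGP μ hμ x 0).trans ?_)
      have : ‖(x, (0 : Vec 0))‖ ≤ n := by rwa [norm_mk_zero0]
      rw [hKn]; exact mul_le_mul_of_nonneg_left (by linarith) hc0.le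
  -- (A.2)
  have hA2' : CondA2 T d k lam c' fn := by
    intro t ht μ hμ
    obtain ⟨Z, h1, h2, h3⟩ := hRF t ht μ hμ
    refine ⟨h3.contDiff le_rfl hlam.le, ?_, ?_⟩
    · have h4 := h3.lipschitz le_rfl hlam.le c' (by linarith)
      convert h4 using 2 with p
      exact Prod.ext (h3.gradient_fst le_rfl hlam.le p.1 p.2)
        (h3.gradient_snd le_rfl hlam.le p.1 p.2)
    · intro x x' a a'
      rw [h3.gradient_fst le_rfl hlam.le, h3.gradient_snd le_rfl hlam.le]
      have := (h3 x x' a a').1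
      linarith
  -- (A.6)
  have hA6' : CondA6 T d k c' fn := by
    intro t ht x μ hμ
    obtain ⟨Z, h1, h2, h3⟩ := hRF t ht μ hμ
    rw [h3.gradient_snd le_rfl hlam.le]
    exact (hA6 t ht _ _ (isP2_Phi n hμ)).trans (by linarith)
  -- (A.5)
  have hA5' : CondA5 T d k c' fn gn := by
    refine ⟨fun t ht => ⟨?_, ?_, ?_⟩, ?_, ?_⟩
    · have h0 := (hco t ht 0 0 (Measure.dirac 0) (isP2_dirac 0) (by simpa using hn0.le)
        (by simpa using hn0.le) (by rw [M2_dirac, norm_zero]; exact hn0.le)).1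
      rw [h0]
      exact (hA5.1 t ht).1.trans (by linarith)
    · rw [hF0g t ht _ (isP2_dirac 0), hd0]
      exact (hA5.1 t ht).2.1.trans (by linarith)
    · exact hA6' t ht 0 _ (isP2_dirac 0)
    · intro t ht x x' a a' μ μ' hμ hμ'
      have m1 := M2_nonneg μ
      have m2 := M2_nonneg μ'
      have p1 := (hPhi μ).2
      have p2 := (hPhi μ').2
      have key := lipReg_abs (K := K) (m := M2 μ + M2 μ') (w := W2 μ' μ) (x := x) (x' := x')
        (a := a) (a' := a') (hFS t ht _ (isP2_Phi n hμ)) (hFS t ht _ (isP2_Phi n hμ'))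
        hγ hlam.le hK hc0.le (by positivity) (W2_nonneg _ _)
        ((hFP t ht _ (isP2_Phi n hμ) x a).trans (by gcongr; linarith))
        ((hFP t ht _ (isP2_Phi n hμ') x' a').trans (by gcongr; linarith))
        (fun y y' => by
          refine (hA5.2.1 t ht y y' a a' _ _ (isP2_Phi n hμ) (isP2_Phi n hμ')).trans ?_
          have := W2_Phi hn0 hμ' hμ
          have q1 := M2_nonneg (Phi n μ)
          have q2 := M2_nonneg (Phi n μ')
          have q3 := W2_nonneg (Phi n μ') (Phi n μ)
          rw [← add_assoc]
          gcongr)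
      rw [hfn]
      refine key.trans ?_
      have := W2_nonneg μ' μ
      rw [← add_assoc]
      gcongr
    · intro x x' μ μ' hμ hμ'
      have m1 := M2_nonneg μ
      have m2 := M2_nonneg μ'
      have p1 := (hPhi μ).2
      have p2 := (hPhi μ').2
      have key := lipReg_abs (K := K) (m := M2 μ + M2 μ') (w := W2 μ' μ) (x := x) (x' := x')
        (a := 0) (a' := 0) (hGS _ (isP2_Phi n hμ)) (hGS _ (isP2_Phi n hμ'))
        hγ hlam.le hK hc0.le (by positivity) (W2_nonneg _ _)
        ((hGP _ (isP2_Phi n hμ) x 0).trans (by gcongr; linarith))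
        ((hGP _ (isP2_Phi n hμ') x' 0).trans (by gcongr; linarith))
        (fun y y' => by
          simp only [norm_mk_zero0]
          refine (hA5.2.2 y y' _ _ (isP2_Phi n hμ) (isP2_Phi n hμ')).trans ?_
          have := W2_Phi hn0 hμ' hμ
          have q1 := M2_nonneg (Phi n μ)
          have q2 := M2_nonneg (Phi n μ')
          have q3 := W2_nonneg (Phi n μ') (Phi n μ)
          rw [← add_assoc]
          gcongr)
      simp only [norm_mk_zero0] at key
      rw [hgn]
      refine key.trans ?_
      have := W2_nonneg μ' μ
      rw [← add_assoc]
      gcongr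
  -- (A.2) local bounds
  have hA2loc' : CondA2loc T d k fn := by
    intro R hR
    refine ⟨(c' + c' * (1 + R + R) * (R + R)) + K + (c' + c' * R), ?_⟩
    intro t ht x a μ hμ hx ha hm
    have hc'0 : (0 : ℝ) ≤ c' := c'.2
    have hxa : ‖(x, a)‖ ≤ R := max_le hx ha
    have b1 : |fn t x μ a| ≤ c' + c' * (1 + R + R) * (R + R) := by
      have h1 := hA5'.2.1 t ht 0 x 0 a _ μ (isP2_dirac 0) hμ
      have h2 := (hA5'.1 t ht).1
      rw [M2_dirac, sub_zero, sub_zero, norm_zero, Prod.norm_mk (0 : Vec d) (0 : Vec k), norm_zero,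
        norm_zero, max_self, add_zero, add_zero] at h1
      have h3 : (c' : ℝ) * (1 + ‖(x, a)‖ + M2 μ) * (‖(x, a)‖ + W2 μ (Measure.dirac 0))
          ≤ c' * (1 + R + R) * (R + R) := by
        have := (W2_dirac_zero hμ).trans hm
        have := W2_nonneg μ (Measure.dirac 0)
        have := M2_nonneg μ
        gcongr
      have h4 := abs_sub_abs_le_abs_sub (fn t x μ a) (fn t 0 (Measure.dirac 0) 0)
      linarith
    have b2 := (hB t ht x a μ hμ).1
    have b3 : ‖gradient (fun b => fn t x μ b) a‖ ≤ c' + c' * R := by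
      have h1 := (hA2' t ht μ hμ).2.1.dist_le_mul (x, a) (x, 0)
      have h2 := hA6' t ht x μ hμ
      rw [dist_eq_norm, dist_eq_norm, Prod.mk_sub_mk, Prod.mk_sub_mk, sub_self, sub_zero,
        Prod.norm_mk (0 : Vec d), norm_zero, max_eq_right (norm_nonneg _)] at h1
      have h3 := (norm_snd_le _).trans h1
      have h4 := norm_sub_norm_le (gradient (fun b => fn t x μ b) a)
        (gradient (fun b => fn t x μ b) 0)
      have h5 : (c' : ℝ) * ‖a‖ ≤ c' * R := by gcongr
      simp only at h3
      linarith
    have u1 : 0 ≤ c' + c' * (1 + R + R) * (R + R) := by positivity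
    have u2 : 0 ≤ c' + c' * R := by positivity
    refine ⟨?_, ?_, ?_⟩ <;> linarith
  -- (A.4)
  have hA4' : CondA4 d c' gn := by
    constructor
    · intro R hR
      refine ⟨|gn 0 (Measure.dirac 0)| + c' * (1 + R + R) * (R + R), fun x μ hμ hx hm => ?_⟩
      have h1 := hA5'.2.2 0 x _ μ (isP2_dirac 0) hμ
      rw [M2_dirac, sub_zero, norm_zero, add_zero, add_zero] at h1
      have h3 : (c' : ℝ) * (1 + ‖x‖ + M2 μ) * (‖x‖ + W2 μ (Measure.dirac 0))
          ≤ c' * (1 + R + R) * (R + R) := by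
        have := (W2_dirac_zero hμ).trans hm
        have := W2_nonneg μ (Measure.dirac 0)
        have := M2_nonneg μ
        gcongr
      have h4 := abs_sub_abs_le_abs_sub (gn x μ) (gn 0 (Measure.dirac 0))
      linarith
    · intro μ hμ
      obtain ⟨Z, h1, h2, h3⟩ := hRG μ hμ
      refine ⟨?_, ?_, ?_⟩
      · have h4 := h3.contDiff le_rfl hlam.le
        exact h4.comp (contDiff_id.prodMk contDiff_const : ContDiff ℝ 1 fun x : Vec d => (x, (0 : Vec 0)))
      · refine convexOn_of_subgrad (D := fun x => gradient (fun z => g z (Phi n μ)) (Z x 0)) ?_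
        intro x x'
        have := (h3 x x' 0 0).1
        simpa using this
      · refine LipschitzWith.of_dist_le_mul fun x y => ?_
        have h4 := (h3.lipschitz le_rfl hlam.le c' (by linarith)).dist_le_mul (x, 0) (y, 0)
        rw [h3.gradient_fst le_rfl hlam.le x 0, h3.gradient_fst le_rfl hlam.le y 0]
        simpa [Prod.dist_eq] using h4
  -- (A.7)
  have hA7' : CondA7 T d k c' fn gn := by
    intro t ht x
    have hx := norm_nonneg x
    constructor
    · rw [hF0g t ht _ (isP2_dirac x), Phi_dirac]
      have := mean_rev hn hc0.le x _ (hA7 t ht (scl n (Measure.dirac x) • x)).1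
      nlinarith
    · rw [hG0g _ (isP2_dirac x), Phi_dirac]
      have := mean_rev hn hc0.le x _ (hA7 t ht (scl n (Measure.dirac x) • x)).2
      nlinarith
  exact ⟨⟨hA2', hA2loc', hA4', hA5', hA6', hA7'⟩, hB, hco⟩

end Final

/-- Existence of approximating sequences: if, in addition to (A.1)--(A.7),
`f` and `g` are `γ`-strongly convex in `x`, then there exist parameters `λ', c_L'` depending
only upon `λ, c_L, γ` (and the structural data `T, d, k`), and sequences `(fⁿ), (gⁿ)` satisfying
(A.1)--(A.7) with these parameters, with bounded gradients in `x`, and coinciding with `(f,g)`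
on every bounded set for `n` large enough. -/
theorem statement11
    (T : ℝ) (hT : 0 < T) (d k : ℕ) (lam : ℝ) (hlam : 0 < lam) (cL : ℝ≥0) (hcL : 0 < cL)
    (γ : ℝ) (hγ : 0 < γ) :
    ∃ (lam' : ℝ) (cL' : ℝ≥0), 0 < lam' ∧ 0 < cL' ∧
      ∀ (f : ℝ → Vec d → Measure (Vec d) → Vec k → ℝ) (g : Vec d → Measure (Vec d) → ℝ),
        CostAssumptions T d k lam cL f g →
        -- γ-strong convexity of `f` in `x` (with gain `λ` in `α`)
        (∀ t ∈ Set.Icc (0:ℝ) T, ∀ μ : Measure (Vec d), IsP2 μ →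
          ∀ (x x' : Vec d) (a a' : Vec k),
            f t x' μ a' - f t x μ a - ⟪x' - x, gradient (fun z => f t z μ a) x⟫
              - ⟪a' - a, gradient (fun b => f t x μ b) a⟫
            ≥ γ * ‖x' - x‖ ^ 2 + lam * ‖a' - a‖ ^ 2) →
        -- γ-strong convexity of `g` in `x`
        (∀ μ : Measure (Vec d), IsP2 μ → ∀ x x' : Vec d,
          g x' μ - g x μ - ⟪x' - x, gradient (fun z => g z μ) x⟫ ≥ γ * ‖x' - x‖ ^ 2) →
        ∃ (fn : ℕ → ℝ → Vec d → Measure (Vec d) → Vec k → ℝ)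
          (gn : ℕ → Vec d → Measure (Vec d) → ℝ),
          -- (i)
          (∀ n : ℕ, 1 ≤ n →
            CostAssumptions T d k lam' cL' (fn n) (gn n) ∧
            ∃ B : ℝ, ∀ t ∈ Set.Icc (0:ℝ) T, ∀ (x : Vec d) (a : Vec k) (μ : Measure (Vec d)),
              IsP2 μ →
                ‖gradient (fun z => fn n t z μ a) x‖ ≤ B ∧
                ‖gradient (fun z => gn n z μ) x‖ ≤ B) ∧
          -- (ii)
          (∀ R > 0, ∃ n₀ : ℕ, ∀ n ≥ n₀,
            ∀ t ∈ Set.Icc (0:ℝ) T, ∀ (x : Vec d) (a : Vec k) (μ : Measure (Vec d)),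
              IsP2 μ → ‖x‖ ≤ R → ‖a‖ ≤ R → M2 μ ≤ R →
                fn n t x μ a = f t x μ a ∧ gn n x μ = g x μ) := by
  have hc0 : (0 : ℝ) < cL := NNReal.coe_pos.2 hcL
  refine ⟨lam, 5 * cL + 4 * cL ^ 2 / γ.toNNReal, hlam, by positivity, ?_⟩
  intro f g hA hf hg
  have hcoe : ((5 * cL + 4 * cL ^ 2 / γ.toNNReal : ℝ≥0) : ℝ) = 5 * cL + 4 * cL ^ 2 / γ := by
    push_cast
    rw [Real.coe_toNNReal _ hγ.le]
  have hpos : 0 ≤ 4 * (cL : ℝ) ^ 2 / γ := by positivity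
  have hmain := fun (n : ℕ) (hn : 1 ≤ n) =>
    main_aux hlam hcL hγ (5 * cL + 4 * cL ^ 2 / γ.toNNReal)
      (by rw [hcoe]; linarith)
      (by
        rw [hcoe]
        have : (cL : ℝ) * (1 + 4 * cL / γ) = cL + 4 * cL ^ 2 / γ := by ring
        rw [this]; linarith)
      hA hf hg (n : ℝ) (cL * (1 + 4 * n)) (by exact_mod_cast hn) rfl _ _ rfl rfl
  refine ⟨fun n t x μ a => lipReg (cL * (1 + 4 * n)) (fun z b => f t z (Phi n μ) b) x a,
    fun n x μ => lipReg (cL * (1 + 4 * n)) (fun z (_ : Vec 0) => g z (Phi n μ)) x 0, ?_, ?_⟩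
  · intro n hn
    exact ⟨(hmain n hn).1, _, (hmain n hn).2.1⟩
  · intro R hR
    obtain ⟨m, hm⟩ := exists_nat_ge R
    refine ⟨max 1 m, fun n hn t ht x a μ hμ hx ha hM => ?_⟩
    have hn1 : 1 ≤ n := (le_max_left _ _).trans hn
    have hRn : R ≤ n := hm.trans (by exact_mod_cast (le_max_right 1 m).trans hn)
    exact (hmain n hn1).2.2 t ht x a μ hμ (hx.trans hRn) (ha.trans hRn) (hM.trans hRn)
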